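/- arXiv:1109.2924 — 2 statements merged into one kernel-verified Lean document; each statement's English description precedes it below -/
import Mathlib

section
/- Let H be the heart of a bounded t-structure on a triangulated category D, and suppose the projectives of H span H, i.e. whenever M ∈ H satisfies Hom(P, M) = 0 for every projective P of H, then M = 0. Then for every object M of D: M lies in H if and only if Hom(P, M[k]) = 0 for every projective P of H and every integer k ≠ 0. -/
open CategoryTheory Category Limits Pretriangulated ZeroObject

universe v u

namespace Paper

variable (C : Type u) [Category.{v} C] [HasZeroObject C] [HasShift C ℤ]
  [Preadditive C] [∀ n : ℤ, (shiftFunctor C n).Additive] [Pretriangulated C]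

/-- The right perpendicular of a set of objects: objects receiving no nonzero
morphism from the set. -/
def perp (P : Set C) : Set C := {G | ∀ F ∈ P, ∀ f : F ⟶ G, f = 0}

/-- A bounded t-structure on a (pre)triangulated category, given by its aisle `P`. -/
structure TStr where
  P : Set C
  /-- `P` is closed under direct summands (hence under isomorphism). -/
  summand : ∀ (X Y : C) (i : Y ⟶ X) (r : X ⟶ Y), i ≫ r = 𝟙 Y → X ∈ P → Y ∈ P
  /-- `P[1] ⊆ P`. -/
  shift_mem : ∀ X ∈ P, X⟦(1 : ℤ)⟧ ∈ P
  /-- Every object fits in a triangle `F → E → G → F[1]` with `F ∈ P` and `G ∈ P^⊥`. -/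
  exists_triangle : ∀ E : C, ∃ (F G : C) (f : F ⟶ E) (g : E ⟶ G) (h : G ⟶ F⟦(1 : ℤ)⟧),
    F ∈ P ∧ G ∈ perp C P ∧ Triangle.mk f g h ∈ distTriang C
  /-- `M[k] ∈ P` for `k ≫ 0`. -/
  bounded_above : ∀ M : C, ∃ a : ℤ, ∀ j : ℤ, a ≤ j → M⟦j⟧ ∈ P
  /-- `M[k] ∈ P^⊥` for `k ≪ 0`. -/
  bounded_below : ∀ M : C, ∃ b : ℤ, ∀ j : ℤ, j ≤ b → M⟦j⟧ ∈ perp C P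

/-- The heart `H = P^⊥[1] ∩ P` of a bounded t-structure. -/
def heart (T : TStr C) : Set C := {X | X ∈ T.P ∧ X⟦(-1 : ℤ)⟧ ∈ perp C T.P}

/-- The shift `S[m]` of a set of objects. -/
def shiftSet (S : Set C) (m : ℤ) : Set C := {X | X⟦(-m : ℤ)⟧ ∈ S}

/-- An object `P` is a projective of a heart if `Hom(P, M[k]) = 0` for all `k ≠ 0`
and all `M` in the heart. -/
def IsProjOf (T : TStr C) (P : C) : Prop :=
  ∀ (k : ℤ), k ≠ 0 → ∀ M ∈ heart C T, ∀ f : P ⟶ M⟦k⟧, f = 0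

/-- A filtration of an object `M` by triangles with factors in the heart, shifted by a
strictly decreasing sequence of degrees: the canonical filtration associated to a bounded
t-structure. -/
structure HeartFiltration (T : TStr C) (M : C) where
  n : ℕ
  obj : ℕ → C
  deg : ℕ → ℤ
  factor : ℕ → C
  zero : IsZero (obj 0)
  top : obj n ≅ M
  mem : ∀ i, 1 ≤ i → i ≤ n → factor i ∈ heart C T
  strict : ∀ i j, 1 ≤ i → i < j → j ≤ n → deg j < deg i
  tri : ∀ i, 1 ≤ i → i ≤ n →
    ∃ (f : obj (i - 1) ⟶ obj i) (g : obj i ⟶ (factor i)⟦deg i⟧)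
      (h : (factor i)⟦deg i⟧ ⟶ (obj (i - 1))⟦(1 : ℤ)⟧),
      Triangle.mk f g h ∈ distTriang C

variable {C}

open Classical in
/-- The homology `H^k(M)` of `M` with respect to the heart, read off from a
filtration: the factor in degree `k` if there is one, and `0` otherwise. -/
noncomputable def HeartFiltration.homologyAt {T : TStr C} {M : C}
    (F : HeartFiltration C T M) (k : ℤ) : C :=
  if h : ∃ i, 1 ≤ i ∧ i ≤ F.n ∧ F.deg i = k then F.factor h.choose else 0

variable (C)

/-- A torsion pair `⟨F, T⟩` in the heart of a bounded t-structure: `Hom(T, F) = 0` and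
every object of the heart is an extension (triangle) of an `F`-object by a `T`-object. -/
structure TorsionPairIn (T : TStr C) where
  free : Set C
  tor : Set C
  free_sub : free ⊆ heart C T
  tor_sub : tor ⊆ heart C T
  hom_zero : ∀ X ∈ tor, ∀ Y ∈ free, ∀ f : X ⟶ Y, f = 0
  exists_ses : ∀ E ∈ heart C T, ∃ (A B : C) (f : A ⟶ E) (g : E ⟶ B) (h : B ⟶ A⟦(1 : ℤ)⟧),
    A ∈ tor ∧ B ∈ free ∧ Triangle.mk f g h ∈ distTriang C

/-- The forward tilt `H^♯` of the heart at a torsion pair `⟨free, tor⟩`: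
objects `E` with `H^1(E) ∈ F`, `H^0(E) ∈ T` and `H^i(E) = 0` otherwise. -/
def tiltSharpSet (T : TStr C) (free tor : Set C) : Set C :=
  {E | ∀ (F : HeartFiltration C T E) (i : ℕ), 1 ≤ i → i ≤ F.n →
    IsZero (F.factor i) ∨ (F.deg i = 1 ∧ F.factor i ∈ free) ∨
      (F.deg i = 0 ∧ F.factor i ∈ tor)}

/-- The backward tilt `H^♭` of the heart at a torsion pair `⟨free, tor⟩`:
objects `E` with `H^0(E) ∈ F`, `H^{-1}(E) ∈ T` and `H^i(E) = 0` otherwise. -/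
def tiltFlatSet (T : TStr C) (free tor : Set C) : Set C :=
  {E | ∀ (F : HeartFiltration C T E) (i : ℕ), 1 ≤ i → i ≤ F.n →
    IsZero (F.factor i) ∨ (F.deg i = 0 ∧ F.factor i ∈ free) ∨
      (F.deg i = -1 ∧ F.factor i ∈ tor)}

/-- Simple objects of a heart (or of any full subcategory closed under the abelian
structure): nonzero objects which are not the middle term of a nontrivial short exact
sequence (triangle) in the heart. -/
def IsSimpleIn (H : Set C) (X : C) : Prop :=
  X ∈ H ∧ ¬ IsZero X ∧ ∀ (A B : C) (f : A ⟶ X) (g : X ⟶ B) (h : B ⟶ A⟦(1 : ℤ)⟧),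
    A ∈ H → B ∈ H → Triangle.mk f g h ∈ (distTriang C) → IsZero A ∨ IsZero B

/-- A heart is finite if it has finitely many simples up to isomorphism and every object
is a finite iterated extension of simple objects. -/
def FiniteHeart (T : TStr C) : Prop :=
  (∃ (n : ℕ) (S : Fin n → C), (∀ i, IsSimpleIn C (heart C T) (S i)) ∧
    ∀ X, IsSimpleIn C (heart C T) X → ∃ i, Nonempty (X ≅ S i)) ∧
  ∀ M ∈ heart C T, ∃ (m : ℕ) (obj : ℕ → C), IsZero (obj 0) ∧ Nonempty (obj m ≅ M) ∧
    ∀ i < m, ∃ (s : C) (f : obj i ⟶ obj (i + 1)) (g : obj (i + 1) ⟶ s)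
      (h : s ⟶ (obj i)⟦(1 : ℤ)⟧),
      IsSimpleIn C (heart C T) s ∧ Triangle.mk f g h ∈ distTriang C

section Biproducts

variable [HasFiniteBiproducts C]

/-- Finite direct sums of copies of an object `S`. -/
def addObj (S : C) : Set C := {M | ∃ n : ℕ, Nonempty (M ≅ ⨁ (fun _ : Fin n => S))}

/-- The simple forward tilt `H^♯_S` of the heart at a rigid simple `S`: the forward tilt
at the torsion pair whose free part consists of finite direct sums of copies of `S`. -/
def simpleSharpSet (T : TStr C) (S : C) : Set C :=
  tiltSharpSet C T (addObj C S) {M | M ∈ heart C T ∧ ∀ f : M ⟶ S, f = 0}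

/-- The simple backward tilt `H^♭_S` of the heart at a rigid simple `S`: the backward
tilt at the torsion pair whose torsion part consists of finite direct sums of copies
of `S`. -/
def simpleFlatSet (T : TStr C) (S : C) : Set C :=
  tiltFlatSet C T {M | M ∈ heart C T ∧ ∀ f : S ⟶ M, f = 0} (addObj C S)

end Biproducts


open Triangulated

variable {C}

namespace TStr

variable (T : TStr C)

lemma mem_of_iso {X Y : C} (e : X ≅ Y) (hX : X ∈ T.P) : Y ∈ T.P :=
  T.summand X Y e.inv e.hom e.inv_hom_id hX

lemma mem_perp_of_iso {X Y : C} (e : X ≅ Y) (hX : X ∈ perp C T.P) : Y ∈ perp C T.P :=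
  fun F hF f ↦ by simpa using congrArg (· ≫ e.hom) (hX F hF (f ≫ e.inv))

lemma shift_neg_one_mem_perp {X : C} (hX : X ∈ perp C T.P) : X⟦(-1 : ℤ)⟧ ∈ perp C T.P := by
  intro F hF f
  apply (shiftFunctor C (1 : ℤ)).map_injective
  have h := T.mem_perp_of_iso ((shiftFunctorCompIsoId C (-1 : ℤ) 1 (by lia)).app X).symm hX
  simpa using h _ (T.shift_mem F hF) ((shiftFunctor C (1 : ℤ)).map f)

/-- The Mathlib t-structure attached to an aisle. -/
def toTStructure : TStructure C where
  le n X := X⟦n⟧ ∈ T.P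
  ge n X := X⟦n - 1⟧ ∈ perp C T.P
  le_isClosedUnderIsomorphisms n :=
    ⟨fun e h ↦ T.mem_of_iso ((shiftFunctor C n).mapIso e) h⟩
  ge_isClosedUnderIsomorphisms n :=
    ⟨fun e h ↦ T.mem_perp_of_iso ((shiftFunctor C (n - 1)).mapIso e) h⟩
  le_shift n a n' h X hX := T.mem_of_iso ((shiftFunctorAdd' C a n' n h).app X) hX
  ge_shift n a n' h X hX :=
    T.mem_perp_of_iso ((shiftFunctorAdd' C a (n' - 1) (n - 1) (by lia)).app X) hX
  zero' X Y f hX hY := by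
    have hX' := T.mem_of_iso ((shiftFunctorZero C ℤ).app X) hX
    have hY' := T.mem_perp_of_iso ((shiftFunctorZero C ℤ).app Y) hY
    exact hY' X hX' f
  le_zero_le X hX := T.shift_mem X (T.mem_of_iso ((shiftFunctorZero C ℤ).app X) hX)
  ge_one_le X hX :=
    T.shift_neg_one_mem_perp (T.mem_perp_of_iso ((shiftFunctorZero C ℤ).app X) hX)
  exists_triangle_zero_one A := by
    obtain ⟨F, G, f, g, h, hF, hG, mem⟩ := T.exists_triangle A
    exact ⟨F, G, T.mem_of_iso ((shiftFunctorZero C ℤ).symm.app F) hF,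
      T.mem_perp_of_iso ((shiftFunctorZero C ℤ).symm.app G) hG, f, g, h, mem⟩

lemma mem_heart_iff (X : C) :
    X ∈ heart C T ↔ T.toTStructure.IsLE X 0 ∧ T.toTStructure.IsGE X 0 :=
  ⟨fun h ↦ ⟨⟨T.mem_of_iso ((shiftFunctorZero C ℤ).symm.app X) h.1⟩, ⟨h.2⟩⟩,
    fun h ↦ ⟨T.mem_of_iso ((shiftFunctorZero C ℤ).app X) h.1.le, h.2.ge⟩⟩

lemma exists_isLE (X : C) : ∃ n : ℤ, T.toTStructure.IsLE X n := by
  obtain ⟨a, ha⟩ := T.bounded_above X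
  exact ⟨a, ⟨ha a le_rfl⟩⟩

lemma exists_isGE (X : C) : ∃ n : ℤ, T.toTStructure.IsGE X n := by
  obtain ⟨b, hb⟩ := T.bounded_below X
  exact ⟨b, ⟨hb (b - 1) (by lia)⟩⟩

end TStr

section Truncation

variable (t : TStructure C)

lemma isLE_truncGE_obj_of_isLE (X : C) (m n : ℤ) (hmn : m ≤ n + 2) [t.IsLE X n] :
    t.IsLE ((t.truncGE m).obj X) n := by
  have : t.IsLE ((t.truncLT m).obj X) (n + 1) := t.isLE_truncLT_obj X m (n + 1) (by lia)
  exact t.isLE₂ _ (rot_of_distTriang _ (t.triangleLTGE_distinguished m X)) n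
    ‹t.IsLE X n› (t.isLE_shift ((t.truncLT m).obj X) (n + 1) 1 n)

lemma isGE_truncLT_obj_of_isGE (X : C) (m n : ℤ) (hmn : n ≤ m + 1) [t.IsGE X n] :
    t.IsGE ((t.truncLT m).obj X) n := by
  have : t.IsGE ((t.truncGE m).obj X) (n - 1) := t.isGE_truncGE_obj X m (n - 1) (by lia)
  exact t.isGE₂ _ (inv_rot_of_distTriang _ (t.triangleLTGE_distinguished m X)) n
    (t.isGE_shift ((t.truncGE m).obj X) (n - 1) (-1) n) ‹t.IsGE X n›

end Truncation

namespace IsProjOf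

variable {T : TStr C} {P : C}

lemma eq_zero_of_isLE_of_isGE_same (hP : IsProjOf C T P) {X : C} (f : P ⟶ X) (n : ℤ)
    (hn : n ≠ 0) [T.toTStructure.IsLE X n] [T.toTStructure.IsGE X n] : f = 0 := by
  have hX : X⟦n⟧ ∈ heart C T := (T.mem_heart_iff _).2
    ⟨T.toTStructure.isLE_shift X n n 0, T.toTStructure.isGE_shift X n n 0⟩
  let e : X⟦n⟧⟦-n⟧ ≅ X := (shiftFunctorCompIsoId C n (-n) (by lia)).app X
  simpa using congrArg (· ≫ e.hom) (hP (-n) (by lia) _ hX (f ≫ e.inv))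

/-- A projective of the heart has no nonzero morphism to an object whose cohomology is
concentrated in an interval of degrees not containing zero. -/
lemma eq_zero_of_isLE_of_isGE (hP : IsProjOf C T P) {X : C} (f : P ⟶ X) (m n : ℤ)
    (hmn : n < 0 ∨ 0 < m) (hLE : T.toTStructure.IsLE X n) (hGE : T.toTStructure.IsGE X m) :
    f = 0 := by
  obtain ⟨d, hd⟩ : ∃ d : ℕ, n < m + d := ⟨(n + 1 - m).toNat, by lia⟩
  induction d generalizing X n with
  | zero => exact (T.toTStructure.isZero X n m (by lia)).eq_of_tgt _ _
  | succ d ih =>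
    by_cases hnm : n < m
    · exact (T.toTStructure.isZero X n m hnm).eq_of_tgt _ _
    have := isLE_truncGE_obj_of_isLE T.toTStructure X n n (by lia)
    have := T.toTStructure.isGE_truncGE_obj X n n
    obtain ⟨g, rfl⟩ := Triangle.coyoneda_exact₂ _
      (T.toTStructure.triangleLTGE_distinguished n X) f
      (hP.eq_zero_of_isLE_of_isGE_same (X := (T.toTStructure.truncGE n).obj X) _ n (by lia))
    rw [ih g (n - 1) (by lia) (T.toTStructure.isLE_truncLT_obj X n (n - 1) (by lia))
      (isGE_truncLT_obj_of_isGE T.toTStructure X n m (by lia)) (by lia)]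
    exact zero_comp

lemma eq_zero_of_isLE (hP : IsProjOf C T P) {X : C} (f : P ⟶ X) (n : ℤ)
    (hn : n < 0) (hX : T.toTStructure.IsLE X n) : f = 0 := by
  obtain ⟨m, hm⟩ := T.exists_isGE X
  exact hP.eq_zero_of_isLE_of_isGE f m n (Or.inl hn) hX hm

lemma eq_zero_of_isGE (hP : IsProjOf C T P) {X : C} (f : P ⟶ X) (m : ℤ)
    (hm : 0 < m) (hX : T.toTStructure.IsGE X m) : f = 0 := by
  obtain ⟨n, hn⟩ := T.exists_isLE X
  exact hP.eq_zero_of_isLE_of_isGE f m n (Or.inr hm) hn hX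

end IsProjOf

section Spanning

variable {T : TStr C}

lemma isLE_neg_one_of_hom_eq_zero
    (hspan : ∀ M ∈ heart C T, (∀ P : C, IsProjOf C T P → ∀ f : P ⟶ M, f = 0) → IsZero M)
    {X : C} (hX : ∀ P : C, IsProjOf C T P → ∀ f : P ⟶ X, f = 0)
    (hLE : T.toTStructure.IsLE X 0) :
    T.toTStructure.IsLE X (-1) := by
  rw [T.toTStructure.isLE_iff_isZero_truncGE_obj (-1) 0 (by lia)]
  refine hspan _ ((T.mem_heart_iff _).2 ⟨isLE_truncGE_obj_of_isLE _ X 0 0 (by lia),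
    T.toTStructure.isGE_truncGE_obj X 0 0⟩) fun P hP f ↦ ?_
  have := T.toTStructure.isLE_truncLT_obj X 0 (-1)
  obtain ⟨g, rfl⟩ := Triangle.coyoneda_exact₃ _
    (T.toTStructure.triangleLTGE_distinguished 0 X) f
    (hP.eq_zero_of_isLE _ (-2) (by lia)
      (T.toTStructure.isLE_shift ((T.toTStructure.truncLT 0).obj X) (-1) 1 (-2)))
  exact (congrArg (· ≫ _) (hX P hP g)).trans zero_comp

lemma isGE_one_of_hom_eq_zero
    (hspan : ∀ M ∈ heart C T, (∀ P : C, IsProjOf C T P → ∀ f : P ⟶ M, f = 0) → IsZero M)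
    {X : C} (hX : ∀ P : C, IsProjOf C T P → ∀ f : P ⟶ X, f = 0)
    (hGE : T.toTStructure.IsGE X 0) :
    T.toTStructure.IsGE X 1 := by
  rw [T.toTStructure.isGE_iff_isZero_truncLT_obj]
  refine hspan _ ((T.mem_heart_iff _).2 ⟨T.toTStructure.isLE_truncLT_obj X 1 0,
    isGE_truncLT_obj_of_isGE _ X 1 0 (by lia)⟩) fun P hP f ↦ ?_
  have := T.toTStructure.isGE_truncGE_obj X 1 1
  obtain ⟨g, rfl⟩ := Triangle.coyoneda_exact₂ _
    (inv_rot_of_distTriang _ (T.toTStructure.triangleLTGE_distinguished 1 X)) f (hX P hP _)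
  exact (congrArg (· ≫ _) (hP.eq_zero_of_isGE g 2 (by lia)
    (T.toTStructure.isGE_shift ((T.toTStructure.truncGE 1).obj X) 1 (-1) 2))).trans zero_comp

lemma isLE_zero_of_hom_shift_eq_zero
    (hspan : ∀ M ∈ heart C T, (∀ P : C, IsProjOf C T P → ∀ f : P ⟶ M, f = 0) → IsZero M)
    {M : C} (hM : ∀ P : C, IsProjOf C T P → ∀ k : ℤ, k ≠ 0 → ∀ f : P ⟶ M⟦k⟧, f = 0) :
    T.toTStructure.IsLE M 0 := by
  obtain ⟨n, hn⟩ := T.exists_isLE M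
  obtain ⟨d, hd⟩ : ∃ d : ℕ, n ≤ d := ⟨n.toNat, by lia⟩
  replace hn := T.toTStructure.isLE_of_le M n d hd
  clear hd
  induction d with
  | zero => exact hn
  | succ d ih =>
    have := isLE_neg_one_of_hom_eq_zero hspan (fun P hP ↦ hM P hP (d + 1 : ℕ) (by lia))
      (T.toTStructure.isLE_shift M (d + 1 : ℕ) _ 0)
    exact ih (T.toTStructure.isLE_of_shift M d (d + 1 : ℕ) (-1))

lemma isGE_zero_of_hom_shift_eq_zero
    (hspan : ∀ M ∈ heart C T, (∀ P : C, IsProjOf C T P → ∀ f : P ⟶ M, f = 0) → IsZero M)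
    {M : C} (hM : ∀ P : C, IsProjOf C T P → ∀ k : ℤ, k ≠ 0 → ∀ f : P ⟶ M⟦k⟧, f = 0) :
    T.toTStructure.IsGE M 0 := by
  obtain ⟨n, hn⟩ := T.exists_isGE M
  obtain ⟨d, hd⟩ : ∃ d : ℕ, -(d : ℤ) ≤ n := ⟨(-n).toNat, by lia⟩
  replace hn := T.toTStructure.isGE_of_ge M (-d) n hd
  clear hd
  induction d with
  | zero => exact hn
  | succ d ih =>
    have := isGE_one_of_hom_eq_zero hspan (fun P hP ↦ hM P hP (-(d + 1 : ℕ)) (by lia))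
      (T.toTStructure.isGE_shift M (-(d + 1 : ℕ)) _ 0)
    exact ih (T.toTStructure.isGE_of_shift M (-d) (-(d + 1 : ℕ)) 1)

end Spanning

variable (C)

/-- If the projectives of the heart `H` span it, then they determine it:
`M ∈ H` iff `Hom(P, M[k]) = 0` for every projective `P` of `H` and every `k ≠ 0`. -/
theorem statement_1 (T : TStr C)
    (hspan : ∀ M ∈ heart C T,
      (∀ P : C, IsProjOf C T P → ∀ f : P ⟶ M, f = 0) → IsZero M)
    (M : C) :
    M ∈ heart C T ↔
      ∀ P : C, IsProjOf C T P → ∀ k : ℤ, k ≠ 0 → ∀ f : P ⟶ M⟦k⟧, f = 0 := by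
  refine ⟨fun hM P hP k hk f ↦ hP k hk M hM f, fun hM ↦ ?_⟩
  exact (T.mem_heart_iff M).2
    ⟨isLE_zero_of_hom_shift_eq_zero hspan hM, isGE_zero_of_hom_shift_eq_zero hspan hM⟩

end Paper
end

section
/- Let k be an algebraically closed field and D a k-linear triangulated category with finite-dimensional Hom spaces. If H_0, H_1, …, H_r (r ≥ 1) are hearts of bounded t-structures on D such that H_0 is finite and each H_{t+1} = (H_t)^♯_{S_t} is the simple forward tilt of H_t at some rigid simple S_t of H_t, then H_0 < H_r; in particular H_r ≠ H_0, so the exchange graph of D (vertices the hearts, edges the simple forward tilts) contains no oriented cycle. -/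
open CategoryTheory Category Limits Pretriangulated ZeroObject

universe v u

namespace Paper

variable (C : Type u) [Category.{v} C] [HasZeroObject C] [HasShift C ℤ]
  [Preadditive C] [∀ n : ℤ, (shiftFunctor C n).Additive] [Pretriangulated C]

variable {C}

variable (C)

section Filtrations

open Triangulated

variable {C}

lemma TStr.mem_P_of_iso (T : TStr C) {X Y : C} (e : X ≅ Y) (hX : X ∈ T.P) : Y ∈ T.P :=
  T.summand X Y e.inv e.hom e.inv_hom_id hX

lemma TStr.mem_perp_of_iso_s9 (T : TStr C) {X Y : C} (e : X ≅ Y) (hX : X ∈ perp C T.P) :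
    Y ∈ perp C T.P := fun F hF f => by
  rw [← cancel_mono e.inv, hX F hF (f ≫ e.inv), zero_comp]

lemma TStr.shift_neg_one_mem_perp_s9 (T : TStr C) {X : C} (hX : X ∈ perp C T.P) :
    X⟦(-1 : ℤ)⟧ ∈ perp C T.P := fun F hF f => by
  apply (shiftFunctor C (1 : ℤ)).map_injective
  rw [Functor.map_zero, ← cancel_mono (shiftNegShift X (1 : ℤ)).hom,
    zero_comp]
  exact hX _ (T.shift_mem F hF) _

/-- The Mathlib t-structure with the same aisle. -/
def TStr.toTStructure_s9 (T : TStr C) : TStructure C where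
  le n X := X⟦n⟧ ∈ T.P
  ge n X := X⟦n - 1⟧ ∈ perp C T.P
  le_isClosedUnderIsomorphisms n :=
    ⟨fun e hX => T.mem_P_of_iso ((shiftFunctor C n).mapIso e) hX⟩
  ge_isClosedUnderIsomorphisms n :=
    ⟨fun e hX => T.mem_perp_of_iso_s9 ((shiftFunctor C (n - 1)).mapIso e) hX⟩
  le_shift n a n' h X hX := T.mem_P_of_iso ((shiftFunctorAdd' C a n' n h).app X) hX
  ge_shift n a n' h X hX :=
    T.mem_perp_of_iso_s9 ((shiftFunctorAdd' C a (n' - 1) (n - 1) (by lia)).app X) hX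
  zero' X Y f hX hY :=
    T.mem_perp_of_iso_s9 ((shiftFunctorZero' C (1 - 1 : ℤ) (by simp)).app Y) hY X
      (T.mem_P_of_iso ((shiftFunctorZero C ℤ).app X) hX) f
  le_zero_le X hX := T.shift_mem X (T.mem_P_of_iso ((shiftFunctorZero C ℤ).app X) hX)
  ge_one_le X hX := T.shift_neg_one_mem_perp_s9
    (T.mem_perp_of_iso_s9 ((shiftFunctorZero' C (1 - 1 : ℤ) (by simp)).app X) hX)
  exists_triangle_zero_one A := by
    obtain ⟨F, G, f, g, h, hF, hG, hT⟩ := T.exists_triangle A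
    exact ⟨F, G, T.mem_P_of_iso ((shiftFunctorZero C ℤ).symm.app F) hF,
      T.mem_perp_of_iso_s9 ((shiftFunctorZero' C (1 - 1 : ℤ) (by simp)).symm.app G) hG,
      f, g, h, hT⟩

lemma TStr.isLE_zero_iff (T : TStr C) (X : C) : T.toTStructure_s9.IsLE X 0 ↔ X ∈ T.P :=
  ⟨fun h => T.mem_P_of_iso ((shiftFunctorZero C ℤ).app X) h.le,
    fun h => ⟨T.mem_P_of_iso ((shiftFunctorZero C ℤ).symm.app X) h⟩⟩

lemma TStr.mem_heart_iff_s9 (T : TStr C) (X : C) :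
    X ∈ heart C T ↔ T.toTStructure_s9.IsLE X 0 ∧ T.toTStructure_s9.IsGE X 0 := by
  rw [T.isLE_zero_iff]
  exact and_congr_right fun _ => ⟨fun h => ⟨h⟩, fun h => h.ge⟩

lemma exists_distTriang_of_iso {A X B A' X' B' : C} {f : A ⟶ X} {g : X ⟶ B}
    {h : B ⟶ A⟦(1 : ℤ)⟧} (hT : Triangle.mk f g h ∈ distTriang C)
    (a : A ≅ A') (x : X ≅ X') (b : B ≅ B') :
    ∃ (f' : A' ⟶ X') (g' : X' ⟶ B') (h' : B' ⟶ A'⟦(1 : ℤ)⟧),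
      Triangle.mk f' g' h' ∈ distTriang C :=
  ⟨a.inv ≫ f ≫ x.hom, x.inv ≫ g ≫ b.hom, b.inv ≫ h ≫ a.hom⟦(1 : ℤ)⟧',
    isomorphic_distinguished _ hT _ (Triangle.isoMk _ _ a.symm x.symm b.symm
      (show (a.inv ≫ f ≫ x.hom) ≫ x.inv = a.inv ≫ f by simp)
      (show (x.inv ≫ g ≫ b.hom) ≫ b.inv = x.inv ≫ g by simp)
      (show (b.inv ≫ h ≫ a.hom⟦(1 : ℤ)⟧') ≫ a.inv⟦(1 : ℤ)⟧' = b.inv ≫ h by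
        simp [← Functor.map_comp]))⟩

/-- Extend a filtration by one further factor of strictly smaller degree. -/
noncomputable def HeartFiltration.append {T : TStr C} {A X B : C} (F : HeartFiltration C T A)
    (d : ℤ) (hd : ∀ i, 1 ≤ i → i ≤ F.n → d < F.deg i) (hB : B ∈ heart C T)
    {f : A ⟶ X} {g : X ⟶ B⟦d⟧} {h : B⟦d⟧ ⟶ A⟦(1 : ℤ)⟧}
    (hT : Triangle.mk f g h ∈ distTriang C) : HeartFiltration C T X where
  n := F.n + 1
  obj i := if i ≤ F.n then F.obj i else X
  deg i := if i ≤ F.n then F.deg i else d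
  factor i := if i ≤ F.n then F.factor i else B
  zero := by simpa using F.zero
  top := eqToIso (by simp)
  mem i hi hi' := by
    split_ifs with h
    · exact F.mem i hi h
    · exact hB
  strict i j hi hij hj := by
    have : i ≤ F.n := by lia
    simp only [this, if_true]
    split_ifs with h
    · exact F.strict i j hi hij h
    · exact hd i hi this
  tri i hi hi' := by
    by_cases h : i ≤ F.n
    · have h' : i - 1 ≤ F.n := by lia
      obtain ⟨f, g, h₃, hT⟩ := F.tri i hi h
      exact exists_distTriang_of_iso hT (eqToIso (if_pos h').symm) (eqToIso (if_pos h).symm)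
        (eqToIso (by simp [h]))
    · obtain rfl : i = F.n + 1 := by lia
      have h' : F.n + 1 - 1 ≤ F.n := by lia
      exact exists_distTriang_of_iso hT (F.top.symm ≪≫ eqToIso (if_pos h').symm)
        (eqToIso (if_neg h).symm) (eqToIso (by simp))

/-- The empty filtration of a zero object. -/
noncomputable def HeartFiltration.ofIsZero (T : TStr C) {X : C} (hX : IsZero X) :
    HeartFiltration C T X where
  n := 0
  obj _ := X
  deg _ := 0
  factor _ := X
  zero := hX
  top := Iso.refl X
  mem i hi hi' := by lia
  strict i j hi hij hj := by lia
  tri i hi hi' := by lia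

/-- The filtration of an object of the heart with a single factor, in degree `0`. -/
noncomputable def HeartFiltration.single {T : TStr C} {X : C} (hX : X ∈ heart C T) :
    HeartFiltration C T X where
  n := 1
  obj i := if i = 0 then 0 else X
  deg _ := 0
  factor _ := X
  zero := by simpa using isZero_zero C
  top := eqToIso (by simp)
  mem i hi hi' := hX
  strict i j hi hij hj := by lia
  tri i hi hi' := by
    obtain rfl : i = 1 := by lia
    exact exists_distTriang_of_iso (contractible_distinguished₁ X)
      (eqToIso (by simp)) (eqToIso (by simp)) ((shiftFunctorZero C ℤ).symm.app X)

lemma TStr.exists_heartFiltration_of_isLE_of_isGE (T : TStr C) (N : ℕ) (X : C) (n : ℤ)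
    (hX : T.toTStructure_s9.IsLE X n) (hX' : T.toTStructure_s9.IsGE X (n + 1 - N)) :
    ∃ F : HeartFiltration C T X, ∀ i, 1 ≤ i → i ≤ F.n → -n ≤ F.deg i := by
  induction N generalizing X n with
  | zero =>
    have hX' : T.toTStructure_s9.IsGE X (n + 1) := by simpa using hX'
    refine ⟨.ofIsZero T (T.toTStructure_s9.isZero X n (n + 1)), fun i hi hi' => ?_⟩
    simp only [HeartFiltration.ofIsZero] at hi'
    lia
  | succ N ih =>
    obtain ⟨A, B, hA, hB, f, g, h, hT⟩ := T.toTStructure_s9.exists_triangle X (n - 1) n (by lia)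
    replace hA : T.toTStructure_s9.IsLE A (n - 1) := ⟨hA⟩
    replace hB : T.toTStructure_s9.IsGE B n := ⟨hB⟩
    have hA' : T.toTStructure_s9.IsGE A (n - 1 + 1 - N) := by
      refine T.toTStructure_s9.isGE₂ _ (inv_rot_of_distTriang _ hT) _ ?_ ?_
      · have := T.toTStructure_s9.isGE_shift B n (-1) (n + 1)
        exact T.toTStructure_s9.isGE_of_ge (B⟦(-1 : ℤ)⟧) _ (n + 1)
      · exact T.toTStructure_s9.isGE_of_ge X _ (n + 1 - (N + 1 : ℕ))
    have hB' : T.toTStructure_s9.IsLE B n := by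
      refine T.toTStructure_s9.isLE₂ _ (rot_of_distTriang _ hT) _ hX ?_
      have := T.toTStructure_s9.isLE_shift A (n - 1) 1 (n - 2)
      exact T.toTStructure_s9.isLE_of_le (A⟦(1 : ℤ)⟧) (n - 2) _
    obtain ⟨F, hF⟩ := ih A (n - 1) hA hA'
    have hBn : B⟦n⟧ ∈ heart C T := (T.mem_heart_iff_s9 _).2
      ⟨T.toTStructure_s9.isLE_shift B n n 0, T.toTStructure_s9.isGE_shift B n n 0⟩
    obtain ⟨f', g', h', hT'⟩ := exists_distTriang_of_iso hT (Iso.refl _) (Iso.refl _)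
      (shiftShiftNeg B n).symm
    refine ⟨F.append (-n) (fun i hi hi' => ?_) hBn hT', fun i hi hi' => ?_⟩
    · have := hF i hi hi'
      lia
    · simp only [HeartFiltration.append]
      split_ifs with hi''
      · have := hF i hi hi''
        lia
      · exact le_rfl

lemma TStr.exists_heartFiltration (T : TStr C) (X : C) (n : ℤ)
    (hX : T.toTStructure_s9.IsLE X n) :
    ∃ F : HeartFiltration C T X, ∀ i, 1 ≤ i → i ≤ F.n → -n ≤ F.deg i := by
  obtain ⟨b, hb⟩ := T.bounded_below X
  have hX' : T.toTStructure_s9.IsGE X (b + 1) := ⟨hb _ (by lia)⟩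
  exact T.exists_heartFiltration_of_isLE_of_isGE (n - b).toNat X n hX
    (T.toTStructure_s9.isGE_of_ge X _ (b + 1))

lemma TStr.nonempty_heartFiltration (T : TStr C) (X : C) :
    Nonempty (HeartFiltration C T X) := by
  obtain ⟨a, ha⟩ := T.bounded_above X
  obtain ⟨F, -⟩ := T.exists_heartFiltration X a ⟨ha a le_rfl⟩
  exact ⟨F⟩

lemma HeartFiltration.mem_P {T U : TStr C} {X : C} (F : HeartFiltration C T X)
    (hF : ∀ i, 1 ≤ i → i ≤ F.n → (F.factor i)⟦F.deg i⟧ ∈ U.P) : X ∈ U.P := by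
  have key : ∀ i ≤ F.n, F.obj i ∈ U.P := by
    intro i
    induction i with
    | zero =>
      intro _
      exact (U.isLE_zero_iff _).1 (U.toTStructure_s9.isLE_of_isZero F.zero 0)
    | succ i ih =>
      intro hi
      obtain ⟨f, g, h, hT⟩ := F.tri (i + 1) (by lia) hi
      exact (U.isLE_zero_iff _).1 (U.toTStructure_s9.isLE₂ _ hT 0
        ((U.isLE_zero_iff _).2 (ih (by lia))) ((U.isLE_zero_iff _).2 (hF _ (by lia) hi)))
  exact U.mem_P_of_iso F.top (key _ le_rfl)

lemma TStr.shift_mem_of_nonneg (T : TStr C) {X : C} (hX : X ∈ T.P) {d : ℤ} (hd : 0 ≤ d) :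
    X⟦d⟧ ∈ T.P := by
  have := (T.isLE_zero_iff X).2 hX
  exact (T.toTStructure_s9.isLE_of_le X 0 d hd).le

lemma TStr.P_subset_of_heart_subset {T U : TStr C} (h : heart C U ⊆ T.P) : U.P ⊆ T.P := by
  intro X hX
  obtain ⟨F, hF⟩ := U.exists_heartFiltration X 0 ((U.isLE_zero_iff X).2 hX)
  exact F.mem_P fun i hi hi' =>
    T.shift_mem_of_nonneg (h (F.mem i hi hi')) (by simpa using hF i hi hi')

lemma TStr.P_eq_of_heart_eq {T U : TStr C} (h : heart C T = heart C U) : T.P = U.P :=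
  (P_subset_of_heart_subset (h.le.trans fun _ hX => hX.1)).antisymm
    (P_subset_of_heart_subset (h.ge.trans fun _ hX => hX.1))

lemma tiltSharpSet_subset_P (T : TStr C) (free tor : Set C) :
    tiltSharpSet C T free tor ⊆ T.P := by
  intro X hX
  obtain ⟨F⟩ := T.nonempty_heartFiltration X
  refine F.mem_P fun i hi hi' => ?_
  rcases hX F i hi hi' with h | ⟨hd, -⟩ | ⟨hd, -⟩
  · exact (T.isLE_zero_iff _).1
      (T.toTStructure_s9.isLE_of_isZero ((shiftFunctor C (F.deg i)).map_isZero h) 0)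
  all_goals exact T.shift_mem_of_nonneg (F.mem i hi hi').1 (by lia)

lemma not_mem_simpleSharpSet [HasFiniteBiproducts C] (T : TStr C) {S : C}
    (hS : S ∈ heart C T) (hS' : ¬ IsZero S) : S ∉ simpleSharpSet C T S := by
  intro h
  rcases h (.single hS) 1 le_rfl le_rfl with h | ⟨hd, -⟩ | ⟨-, -, h⟩
  · exact hS' h
  · exact zero_ne_one hd
  · exact hS' ((IsZero.iff_id_eq_zero S).2 (h (𝟙 S)))

end Filtrations

/-- If `H_0, …, H_r` (`r ≥ 1`) are hearts with `H_0` finite and each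
`H_{t+1}` the simple forward tilt of `H_t` at a rigid simple `S_t`, then `H_0 < H_r`;
in particular `H_r ≠ H_0`, so the exchange graph contains no oriented cycle. -/
theorem statement_9 (k : Type*) [Field k] [IsAlgClosed k] [Linear k C]
    [∀ X Y : C, FiniteDimensional k (X ⟶ Y)] [HasFiniteBiproducts C]
    (r : ℕ) (hr : 1 ≤ r) (T : ℕ → TStr C) (S : ℕ → C)
    (hfin : FiniteHeart C (T 0))
    (hstep : ∀ t < r, IsSimpleIn C (heart C (T t)) (S t) ∧
      (∀ f : S t ⟶ (S t)⟦(1 : ℤ)⟧, f = 0) ∧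
      heart C (T (t + 1)) = simpleSharpSet C (T t) (S t)) :
    (T r).P ⊆ (T 0).P ∧ heart C (T 0) ≠ heart C (T r) := by
  have hP : ∀ t < r, (T (t + 1)).P ⊆ (T t).P := fun t ht =>
    TStr.P_subset_of_heart_subset ((hstep t ht).2.2.le.trans (tiltSharpSet_subset_P _ _ _))
  have hP₁ : ∀ t, t + 1 ≤ r → (T (t + 1)).P ⊆ (T 1).P := by
    intro t
    induction t with
    | zero => exact fun _ => subset_rfl
    | succ t ih => exact fun ht => (hP _ ht).trans (ih (by lia))
  have hr₁ : (T r).P ⊆ (T 1).P := by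
    obtain ⟨t, rfl⟩ := Nat.exists_eq_add_of_le' hr
    exact hP₁ t le_rfl
  refine ⟨hr₁.trans (hP 0 hr), fun h => ?_⟩
  have h₀₁ : (T 0).P = (T 1).P :=
    ((TStr.P_eq_of_heart_eq h).le.trans hr₁).antisymm (hP 0 hr)
  obtain ⟨hS, -, hheart⟩ := hstep 0 hr
  refine not_mem_simpleSharpSet (T 0) hS.1 hS.2.1 ?_
  rw [← hheart]
  simpa only [heart, zero_add, h₀₁] using hS.1

end Paper
end
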